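/- arXiv:0912.1034 — 4 statements merged into one kernel-verified Lean document; each statement's English description precedes it below -/
import Mathlib

section
/- Let L be a regular language over a finite alphabet Σ with quotient complexity κ(L) = n, where n ≥ 2, and suppose L has the empty quotient (i.e., L_w = ∅ for some word w). Then the suffix-closure of L has quotient complexity at most 2^(n−1), i.e., κ(⪯L) ≤ 2^(n−1). -/
/-! The quotient of the suffix-closure by `w` is `⋃ p, L_{pw}`, a union of left quotients of `L`.
Dropping the empty quotient from such a union does not change it, so every quotient of the
suffix-closure is the union of a subset of the `n - 1` nonempty quotients of `L`, and there are
`2 ^ (n - 1)` such subsets. -/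

open List

/-- Left quotient of a language by a word: `L_w = {x | w ++ x ∈ L}`. -/
def leftQuot {α : Type*} (L : Set (List α)) (w : List α) : Set (List α) :=
  {x | w ++ x ∈ L}

/-- The set of all left quotients of `L`. -/
def quotients {α : Type*} (L : Set (List α)) : Set (Set (List α)) :=
  Set.range (leftQuot L)

/-- Suffix-closure of a language. -/
def sufCl {α : Type*} (L : Set (List α)) : Set (List α) :=
  {u | ∃ w ∈ L, u <:+ w}

lemma leftQuot_sufCl {α : Type*} (L : Set (List α)) (w : List α) :
    leftQuot (sufCl L) w = ⋃₀ (Set.range (fun p => leftQuot L (p ++ w)) \ {∅}) := by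
  rw [Set.sUnion_sdiff_singleton_empty]
  ext x
  simp [leftQuot, sufCl, List.IsSuffix]

lemma quotients_sufCl_subset {α : Type*} (L : Set (List α)) :
    quotients (sufCl L) ⊆ Set.sUnion '' 𝒫 (quotients L \ {∅}) := by
  rintro _ ⟨w, rfl⟩
  refine ⟨_, ?_, (leftQuot_sufCl L w).symm⟩
  refine Set.sdiff_subset_sdiff_left ?_
  rintro _ ⟨p, rfl⟩
  exact ⟨p ++ w, rfl⟩

theorem suffix_closure_complexity_with_empty_quotient {α : Type*} [Finite α]
    (L : Set (List α)) (n : ℕ) (hn : 2 ≤ n) (hL : (quotients L).encard = n)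
    (hempty : ∃ w : List α, leftQuot L w = ∅) :
    (quotients (sufCl L)).encard ≤ ((2 ^ (n - 1) : ℕ) : ℕ∞) := by
  obtain ⟨w, hw⟩ := hempty
  have hmem : ∅ ∈ quotients L := ⟨w, hw⟩
  have hfin : (quotients L).Finite := Set.finite_of_encard_eq_coe hL
  have hcard : (quotients L \ {∅}).ncard = n - 1 := by
    rw [Set.ncard_sdiff_singleton_of_mem hmem, Set.ncard, hL, ENat.toNat_natCast]
  have hfin' : (quotients L \ {∅}).Finite := hfin.sdiff
  calc (quotients (sufCl L)).encard
      ≤ (Set.sUnion '' 𝒫 (quotients L \ {∅})).encard :=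
        Set.encard_le_encard (quotients_sufCl_subset L)
    _ ≤ (𝒫 (quotients L \ {∅})).encard := Set.encard_image_le _ _
    _ = ((2 ^ (n - 1) : ℕ) : ℕ∞) := by
        rw [← hcard, ← Set.ncard_powerset _ hfin']
        exact (Set.Finite.cast_ncard_eq hfin'.finite_subsets).symm
end

section
/- Let K and L be factor-closed languages over a finite alphabet Σ with quotient complexities κ(K) = m and κ(L) = n, where m ≥ 2 and n ≥ 2. Then the product satisfies κ(KL) ≤ m + n − 1. -/
/-!
Assume `K` is neither empty nor full and let `w` be a word. If `w ∈ K`, then, since `L` is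
suffix-closed, `(KL)_w = K_w L`. If `w ∉ K`, let `w = u ++ v` with `u` the longest prefix of `w`
in `K`; any factorization of a word `w ++ x ∈ KL` has its first factor inside `u`, so its second
factor ends in `v ++ x`, and suffix-closure of `L` gives `(KL)_w = L_v`. So every quotient of `KL`
is a quotient of `L` or the image of a nonempty quotient of `K` under `Q ↦ QL`. As `K` is not full,
`∅` is a quotient of `K`, hence `K` has only `m - 1` nonempty quotients, which gives the bound
`(m - 1) + n`.
-/

open List

/-- A language is factor-closed if it contains all factors of its words. -/
def IsFactorClosed {α : Type*} (L : Set (List α)) : Prop :=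
  ∀ w ∈ L, ∀ u, u <:+: w → u ∈ L

/-- Product (concatenation) of two languages. -/
def lprod {α : Type*} (K L : Set (List α)) : Set (List α) :=
  {w | ∃ u ∈ K, ∃ v ∈ L, w = u ++ v}

/-- A longest prefix in `K` exists for every word, when `[] ∈ K`. -/
lemma exists_longest_prefix {α : Type*} (K : Set (List α)) (h0 : [] ∈ K) (w : List α) :
    ∃ u v, w = u ++ v ∧ u ∈ K ∧ ∀ p ∈ K, p <+: w → p <+: u := by
  induction w using List.reverseRecOn with
  | nil => exact ⟨[], [], rfl, h0, fun p _ hp => hp⟩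
  | append_singleton w a ih =>
    by_cases hw : w ++ [a] ∈ K
    · exact ⟨w ++ [a], [], by simp, hw, fun p _ hp => hp⟩
    · obtain ⟨u, v, rfl, hu, hmax⟩ := ih
      refine ⟨u, v ++ [a], by simp, hu, fun p hpK hp => ?_⟩
      rcases List.prefix_concat_iff.1 hp with rfl | hp
      · exact absurd hpK hw
      · exact hmax p hpK hp

lemma leftQuot_lprod_of_mem {α : Type*} {K L : Set (List α)} (hLcl : IsFactorClosed L)
    {w : List α} (hw : w ∈ K) :
    leftQuot (lprod K L) w = lprod (leftQuot K w) L := by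
  ext x
  constructor
  · rintro ⟨p, hp, q, hq, h⟩
    rcases List.append_eq_append_iff.1 h with ⟨r, rfl, rfl⟩ | ⟨r, rfl, rfl⟩
    · exact ⟨r, hp, q, hq, rfl⟩
    · exact ⟨[], by simpa [leftQuot] using hw, x,
        hLcl _ hq _ (List.suffix_append r x).isInfix, rfl⟩
  · rintro ⟨r, hr, q, hq, rfl⟩
    exact ⟨w ++ r, hr, q, hq, by simp⟩

lemma leftQuot_lprod_of_notMem {α : Type*} {K L : Set (List α)} (hKcl : IsFactorClosed K)
    (hLcl : IsFactorClosed L) (h0 : [] ∈ K) {w : List α} (hw : w ∉ K) :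
    ∃ v, leftQuot (lprod K L) w = leftQuot L v := by
  obtain ⟨u, v, rfl, hu, hmax⟩ := exists_longest_prefix K h0 w
  refine ⟨v, ?_⟩
  ext x
  constructor
  · rintro ⟨p, hp, q, hq, h⟩
    have hpw : p <+: u ++ v := by
      rcases List.prefix_or_prefix_of_prefix (l₃ := u ++ v ++ x) ⟨q, h.symm⟩
        (List.prefix_append (u ++ v) x) with h1 | h1
      · exact h1
      · exact absurd (hKcl _ hp _ h1.isInfix) hw
    obtain ⟨r, rfl⟩ := hmax p hp hpw
    have hqe : r ++ (v ++ x) = q := by simpa using h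
    subst hqe
    exact hLcl _ hq _ (List.suffix_append r (v ++ x)).isInfix
  · intro hx
    exact ⟨u, hu, v ++ x, hx, by simp⟩

/-- If `[] ∉ K` then `K = ∅`, and if `∅` is not a quotient of `K` then `K` is the set of all words;
either way `K` has just one quotient. -/
lemma nil_mem_and_empty_mem_quotients {α : Type*} {K : Set (List α)} (hKcl : IsFactorClosed K)
    (h : 1 < (quotients K).encard) : [] ∈ K ∧ ∅ ∈ quotients K := by
  obtain ⟨A, B, ⟨a, rfl⟩, ⟨b, rfl⟩, hab⟩ := Set.one_lt_encard_iff.1 h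
  constructor
  · by_contra h0
    have hK (w) : w ∉ K := fun hw => h0 (hKcl w hw [] (List.nil_infix))
    exact hab (by ext x; simp [leftQuot, hK])
  · by_contra he
    have hK (w) : w ∈ K := by
      by_contra hw
      refine he ⟨w, Set.eq_empty_iff_forall_notMem.2 fun x hx => hw ?_⟩
      exact hKcl _ hx _ (List.prefix_append w x).isInfix
    exact hab (by ext x; simp [leftQuot, hK])

theorem factor_closed_product {α : Type*} [Finite α] (K L : Set (List α)) (m n : ℕ)
    (hm : 2 ≤ m) (hn : 2 ≤ n)
    (hKcl : IsFactorClosed K) (hLcl : IsFactorClosed L)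
    (hK : (quotients K).encard = m) (hL : (quotients L).encard = n) :
    (quotients (lprod K L)).encard ≤ ((m + n - 1 : ℕ) : ℕ∞) := by
  obtain ⟨h0, he⟩ := nil_mem_and_empty_mem_quotients hKcl
    (by rw [hK]; exact_mod_cast hm)
  have hsub : quotients (lprod K L) ⊆
      (fun Q => lprod Q L) '' (quotients K \ {∅}) ∪ quotients L := by
    rintro _ ⟨w, rfl⟩
    by_cases hw : w ∈ K
    · refine Or.inl ⟨leftQuot K w, ⟨⟨w, rfl⟩, ?_⟩, (leftQuot_lprod_of_mem hLcl hw).symm⟩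
      exact Set.Nonempty.ne_empty ⟨[], by simpa [leftQuot] using hw⟩
    · obtain ⟨v, hv⟩ := leftQuot_lprod_of_notMem hKcl hLcl h0 hw
      exact Or.inr ⟨v, hv.symm⟩
  have hcard : (quotients K \ {∅}).encard = ((m - 1 : ℕ) : ℕ∞) := by
    rw [Set.encard_sdiff_singleton_of_mem he, hK]; norm_cast
  calc (quotients (lprod K L)).encard
      ≤ ((fun Q => lprod Q L) '' (quotients K \ {∅})).encard + (quotients L).encard :=
        (Set.encard_le_encard hsub).trans (Set.encard_union_le _ _)
    _ ≤ ((m - 1 : ℕ) : ℕ∞) + n := by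
        rw [hL, ← hcard]; exact add_le_add (Set.encard_image_le _ _) le_rfl
    _ = ((m + n - 1 : ℕ) : ℕ∞) := by
        norm_cast; omega
end

section
/- Let L be a suffix-closed language over a finite alphabet Σ with quotient complexity κ(L) = n, where n ≥ 2. Then κ(L*) ≤ n; moreover, if L ≠ L*, then κ(L*) ≤ n − 1. -/
/-!
Since `n ≥ 2`, `L` is nonempty, so suffix-closure gives `[] ∈ L`. Given a word `w`, write
`w = u ++ v` with `u ∈ L*` as long as possible. Every factorization `w = u' ++ v'` with
`u' ∈ L*` then has `v` as a suffix of `v'`, and suffix-closure gives `L_{v'} ⊆ L_v`; hence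
`(L*)_w = L_v L*` (`leftQuot_lstar`). So `Q ↦ Q L*` maps the quotients of `L` onto a set containing
all quotients of `L*`, which is the first bound.

For the second bound, maximality of `u` forces `v = []` or `v ∉ L`, so only the quotients `Q` of `L`
with `Q = L` or `[] ∉ Q` are needed (`quotients_lstar_subset`). If `L ≠ L*` then `L` is not closed
under concatenation (`lstar_subset`), so some `a ∈ L` has `L_a ≠ L`; as `[] ∈ L_a`, the quotient
`L_a` is superfluous, and one is saved.
-/

open List

/-- A language is suffix-closed if it contains all suffixes of its words. -/
def IsSuffixClosed {α : Type*} (L : Set (List α)) : Prop :=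
  ∀ w ∈ L, ∀ u, u <:+ w → u ∈ L

/-- `i`-th power of a language. -/
def lpow {α : Type*} (L : Set (List α)) : ℕ → Set (List α)
  | 0 => {[]}
  | n + 1 => lprod L (lpow L n)

/-- Kleene star of a language: union of all powers `L ^ i`, `i ≥ 0`. -/
def lstar {α : Type*} (L : Set (List α)) : Set (List α) :=
  ⋃ i : ℕ, lpow L i

section Star

variable {α : Type*} {L : Set (List α)}

lemma mem_lstar {w : List α} : w ∈ lstar L ↔ ∃ i, w ∈ lpow L i := Set.mem_iUnion

lemma nil_mem_lstar : [] ∈ lstar L := mem_lstar.2 ⟨0, rfl⟩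

lemma append_mem_lstar_of_mem {a b : List α} (ha : a ∈ L) (hb : b ∈ lstar L) :
    a ++ b ∈ lstar L := by
  obtain ⟨i, hi⟩ := mem_lstar.1 hb
  exact mem_lstar.2 ⟨i + 1, a, ha, b, hi, rfl⟩

lemma append_mem_lstar {u v : List α} (hu : u ∈ lstar L) (hv : v ∈ lstar L) :
    u ++ v ∈ lstar L := by
  obtain ⟨i, hi⟩ := mem_lstar.1 hu
  induction i generalizing u with
  | zero =>
    obtain rfl : u = [] := hi
    exact hv
  | succ i ih =>
    obtain ⟨a, ha, b, hb, rfl⟩ := hi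
    rw [List.append_assoc]
    exact append_mem_lstar_of_mem ha (ih (mem_lstar.2 ⟨i, hb⟩) hb)

lemma subset_lstar : L ⊆ lstar L := fun a ha => by
  simpa using append_mem_lstar_of_mem ha nil_mem_lstar

lemma lstar_subset (h0 : [] ∈ L) (h : ∀ a ∈ L, ∀ b ∈ L, a ++ b ∈ L) : lstar L ⊆ L := by
  intro w hw
  obtain ⟨i, hi⟩ := mem_lstar.1 hw
  clear hw
  induction i generalizing w with
  | zero =>
    obtain rfl : w = [] := hi
    exact h0
  | succ i ih =>
    obtain ⟨a, ha, b, hb, rfl⟩ := hi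
    exact h a ha b (ih hb)

/-- Cutting a word of `L*` after the prefix `w` cuts one of its factors in `L` into `v` and `x₁`.
The hypothesis `[] ∈ L` provides such a factor when the whole word is empty. -/
lemma exists_split (h0 : [] ∈ L) {w x : List α} (h : w ++ x ∈ lstar L) :
    ∃ u v x₁ x₂, w = u ++ v ∧ x = x₁ ++ x₂ ∧ u ∈ lstar L ∧ v ++ x₁ ∈ L ∧ x₂ ∈ lstar L := by
  obtain ⟨i, hi⟩ := mem_lstar.1 h
  clear h
  induction i generalizing w with
  | zero =>
    obtain ⟨rfl, rfl⟩ := List.append_eq_nil_iff.1 (show w ++ x = [] from hi)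
    exact ⟨[], [], [], [], rfl, rfl, nil_mem_lstar, h0, nil_mem_lstar⟩
  | succ i ih =>
    obtain ⟨a, ha, b, hb, hab⟩ := hi
    rcases List.append_eq_append_iff.1 hab with ⟨c, rfl, rfl⟩ | ⟨c, rfl, rfl⟩
    · exact ⟨[], w, c, b, rfl, rfl, nil_mem_lstar, ha, mem_lstar.2 ⟨i, hb⟩⟩
    · obtain ⟨u, v, x₁, x₂, rfl, hx, hu, hv, h2⟩ := ih hb
      exact ⟨a ++ u, v, x₁, x₂, by simp, hx, append_mem_lstar_of_mem ha hu, hv, h2⟩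

lemma leftQuot_lstar (h0 : [] ∈ L) (hcl : IsSuffixClosed L) (w : List α) :
    ∃ v, (v = [] ∨ v ∉ L) ∧ leftQuot (lstar L) w = lprod (leftQuot L v) (lstar L) := by
  classical
  -- Among all `v` with `w = u ++ v` and `u ∈ L*`, take a shortest one.
  have hex : ∃ k, ∃ u v, w = u ++ v ∧ u ∈ lstar L ∧ v.length = k :=
    ⟨_, [], w, rfl, nil_mem_lstar, rfl⟩
  obtain ⟨u, v, hw, hu, hk⟩ := Nat.find_spec hex
  have hmin : ∀ u' v', w = u' ++ v' → u' ∈ lstar L → v.length ≤ v'.length := fun u' v' h h' =>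
    hk ▸ Nat.find_min' hex ⟨u', v', h, h', rfl⟩
  refine ⟨v, ?_, ?_⟩
  · by_contra! hv
    have := hmin w [] (by simp) (hw ▸ append_mem_lstar hu (subset_lstar hv.2))
    exact hv.1 (List.length_eq_zero_iff.1 (Nat.le_zero.1 this))
  · ext x
    constructor
    · intro hx
      obtain ⟨u', v', x₁, x₂, hw', rfl, hu', hv', h2⟩ := exists_split h0 hx
      have hsuf : v <:+ v' :=
        List.suffix_of_suffix_length_le ⟨u, hw.symm⟩ ⟨u', hw'.symm⟩ (hmin u' v' hw' hu')
      obtain ⟨t, rfl⟩ := hsuf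
      exact ⟨x₁, hcl _ hv' _ ⟨t, by simp⟩, x₂, h2, rfl⟩
    · rintro ⟨x₁, h1, x₂, h2, rfl⟩
      change w ++ (x₁ ++ x₂) ∈ lstar L
      rw [hw, List.append_assoc, ← List.append_assoc v]
      exact append_mem_lstar hu (append_mem_lstar_of_mem h1 h2)

lemma quotients_lstar_subset (h0 : [] ∈ L) (hcl : IsSuffixClosed L) :
    quotients (lstar L) ⊆
      (fun Q => lprod Q (lstar L)) '' {Q ∈ quotients L | Q = L ∨ [] ∉ Q} := by
  rintro _ ⟨w, rfl⟩
  obtain ⟨v, hv, h⟩ := leftQuot_lstar h0 hcl w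
  refine ⟨leftQuot L v, ⟨⟨v, rfl⟩, ?_⟩, h.symm⟩
  rcases hv with rfl | hv
  · exact Or.inl rfl
  · exact Or.inr (by simpa [leftQuot] using hv)

end Star

theorem suffix_closed_star {α : Type*} [Finite α] (L : Set (List α)) (n : ℕ)
    (hn : 2 ≤ n) (hLcl : IsSuffixClosed L) (hL : (quotients L).encard = n) :
    (quotients (lstar L)).encard ≤ (n : ℕ∞) ∧
      (L ≠ lstar L → (quotients (lstar L)).encard ≤ ((n - 1 : ℕ) : ℕ∞)) := by
  have h0 : [] ∈ L := by
    -- The empty language has the single quotient `∅`.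
    have hne : L.Nonempty := by
      by_contra! hem
      have hsub : quotients L ⊆ {∅} := by
        rintro _ ⟨w, rfl⟩
        simp [leftQuot, hem]
      have h1 := Set.encard_le_encard hsub
      rw [hL, Set.encard_singleton] at h1
      have : n ≤ 1 := by exact_mod_cast h1
      omega
    obtain ⟨w, hw⟩ := hne
    exact hLcl w hw [] (List.nil_suffix)
  have key : (quotients (lstar L)).encard ≤ {Q ∈ quotients L | Q = L ∨ [] ∉ Q}.encard :=
    (Set.encard_le_encard (quotients_lstar_subset h0 hLcl)).trans (Set.encard_image_le _ _)
  refine ⟨key.trans (hL ▸ Set.encard_le_encard (Set.sep_subset _ _)), fun hne => ?_⟩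
  obtain ⟨a, ha, haL⟩ : ∃ a ∈ L, leftQuot L a ≠ L := by
    by_contra! hall
    refine hne (subset_lstar.antisymm (lstar_subset h0 fun a ha b hb => ?_))
    rw [← hall a ha] at hb
    exact hb
  have hsub : {Q ∈ quotients L | Q = L ∨ [] ∉ Q} ⊆ quotients L \ {leftQuot L a} := by
    rintro Q ⟨hQ, hQ'⟩
    refine ⟨hQ, ?_⟩
    rintro rfl
    exact hQ'.elim haL fun h => h (by simpa [leftQuot] using ha)
  refine (key.trans (Set.encard_le_encard hsub)).trans ?_
  have hmem : leftQuot L a ∈ quotients L := ⟨a, rfl⟩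
  rw [Set.encard_sdiff_singleton_of_mem hmem, hL]
  exact_mod_cast le_rfl
end

section
/- Let L be a suffix-closed language over a finite alphabet Σ with quotient complexity κ(L) = n, where n ≥ 2. Then the reversal satisfies κ(L^R) ≤ 2^(n−1) + 1. -/
/-!
For a word `v`, the quotient of `lrev L` by `v` consists of the words `x` with
`v.reverse ∈ leftQuot L x.reverse`; it is therefore determined by the set `S` of those quotients
of `L` that contain `v.reverse`. If `L` is suffix-closed, every quotient of `L` is a subset of `L`,
so either `S` is empty or `L ∈ S`. This leaves at most `1 + 2 ^ (n - 1)` possibilities for `S`.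
-/

open List

/-- Reversal of a language. -/
def lrev {α : Type*} (L : Set (List α)) : Set (List α) :=
  List.reverse '' L

theorem mem_leftQuot_lrev {α : Type*} (L : Set (List α)) (v x : List α) :
    x ∈ leftQuot (lrev L) v ↔ v.reverse ∈ leftQuot L x.reverse := by
  simp only [leftQuot, lrev, Set.mem_ofPred_eq, Set.mem_image]
  constructor
  · rintro ⟨y, hy, h⟩
    rwa [← List.reverse_append, ← h, List.reverse_reverse]
  · intro h
    exact ⟨_, h, by simp⟩

theorem leftQuot_subset {α : Type*} {L : Set (List α)} (hL : IsSuffixClosed L) (w : List α) :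
    leftQuot L w ⊆ L :=
  fun x hx => hL _ hx x (List.suffix_append w x)

/-- Every quotient of the reversal is empty, or is coded by a set of quotients of `L`
containing `L` itself. -/
theorem quotients_lrev_subset {α : Type*} {L : Set (List α)} (hL : IsSuffixClosed L) :
    quotients (lrev L) ⊆ insert ∅
      ((fun S : Set (Set (List α)) => {x : List α | leftQuot L x.reverse ∈ insert L S}) ''
        𝒫 (quotients L \ {L})) := by
  rintro _ ⟨v, rfl⟩
  by_cases hv : v.reverse ∈ L
  · right
    refine ⟨{Q | Q ∈ quotients L \ {L} ∧ v.reverse ∈ Q}, fun Q hQ => hQ.1, ?_⟩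
    ext x
    rw [mem_leftQuot_lrev]
    constructor
    · rintro (h | h)
      · rwa [h]
      · exact h.2
    · intro h
      by_cases hx : leftQuot L x.reverse = L
      · exact Or.inl hx
      · exact Or.inr ⟨⟨⟨_, rfl⟩, hx⟩, h⟩
  · left
    ext x
    rw [mem_leftQuot_lrev]
    exact ⟨fun h => hv (leftQuot_subset hL _ h), fun h => h.elim⟩

theorem suffix_closed_reversal {α : Type*} [Finite α] (L : Set (List α)) (n : ℕ)
    (hn : 2 ≤ n) (hLcl : IsSuffixClosed L) (hL : (quotients L).encard = n) :
    (quotients (lrev L)).encard ≤ ((2 ^ (n - 1) + 1 : ℕ) : ℕ∞) := by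
  have hfin : (quotients L).Finite := Set.finite_of_encard_eq_coe hL
  have hmem : L ∈ quotients L := ⟨[], rfl⟩
  have hcard : (quotients L \ {L}).ncard = n - 1 := by
    rw [Set.ncard_sdiff_singleton_of_mem hmem, Set.ncard_def, hL, ENat.toNat_natCast]
  have hpow : (𝒫 (quotients L \ {L})).encard = ((2 ^ (n - 1) : ℕ) : ℕ∞) := by
    have hd : (quotients L \ {L}).Finite := hfin.sdiff
    rw [← hd.powerset.cast_ncard_eq, Set.ncard_powerset _ hd, hcard]
  calc (quotients (lrev L)).encard
      ≤ _ := Set.encard_le_encard (quotients_lrev_subset hLcl)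
    _ ≤ _ := Set.encard_insert_le _ _
    _ ≤ (𝒫 (quotients L \ {L})).encard + 1 := by
        gcongr
        exact Set.encard_image_le _ _
    _ = _ := by rw [hpow]; norm_cast
end
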